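/- arXiv:2108.00711 — 2 statements merged into one kernel-verified Lean document; each statement's English description precedes it below -/
import Mathlib

section
/- Let f : V × ℝ → ℝ (V any set) be such that for each x, u ↦ f(x,u) is continuous, f(x,u)/u → 0 as u → 0, and u ↦ f(x,u)/|u| is strictly increasing on (−∞,0) and on (0,∞). Set F(x,u) = ∫₀ᵘ f(x,s) ds. Then F(x,u) ≤ ½ f(x,u)·u for every x ∈ V and every u ∈ ℝ, with strict inequality for u ≠ 0. -/
open scoped ENNReal

noncomputable section

/-- `H¹(V)`: as a set, the ℓ²-summable real functions on the vertex set;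
the `H¹` norm is equivalent to the ℓ² norm by the uniform degree bound. -/
abbrev H1 (Vtx : Type*) := lp (fun _ : Vtx => ℝ) 2

variable {Vtx : Type*}

/-- `Γ(u,v)(x) = (1/2) Σ_{y∼x} (u(y)-u(x))(v(y)-v(x))`. -/
def gammaProd (adj : Vtx → Vtx → Prop) (u v : Vtx → ℝ) (x : Vtx) : ℝ :=
  (1/2) * ∑' y : {y : Vtx // adj x y}, (u y.1 - u x) * (v y.1 - v x)

/-- `|∇u|²(x) = (1/2) Σ_{y∼x} (u(y)-u(x))²`. -/
def gradSq (adj : Vtx → Vtx → Prop) (u : Vtx → ℝ) (x : Vtx) : ℝ :=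
  gammaProd adj u u x

/-- `Δu(x) = Σ_{y∼x} (u(y)-u(x))`. -/
def graphLap (adj : Vtx → Vtx → Prop) (u : Vtx → ℝ) (x : Vtx) : ℝ :=
  ∑' y : {y : Vtx // adj x y}, (u y.1 - u x)

/-- the norm `‖u‖` induced by the potential `V`:
`‖u‖² = Σ_x (|∇u|²(x) + V(x)u(x)²)`. -/
def nrmV (adj : Vtx → Vtx → Prop) (Vp : Vtx → ℝ) (u : Vtx → ℝ) : ℝ :=
  Real.sqrt (∑' x, (gradSq adj u x + Vp x * (u x)^2))

/-- the `V`-norm of an element of `H¹`. -/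
def nrmH (adj : Vtx → Vtx → Prop) (Vp : Vtx → ℝ) (u : H1 Vtx) : ℝ :=
  nrmV adj Vp (fun y => u y)

/-- `⟨u,v⟩ = Σ_x (Γ(u,v)(x) + V(x)u(x)v(x))`. -/
def iprodH (adj : Vtx → Vtx → Prop) (Vp : Vtx → ℝ) (u v : H1 Vtx) : ℝ :=
  ∑' x, (gammaProd adj (fun y => u y) (fun y => v y) x + Vp x * u x * v x)

/-- the variational functional `Φ(u) = ½‖u‖² − Σ_x F(x,u(x))`. -/
def PhiF (adj : Vtx → Vtx → Prop) (Vp : Vtx → ℝ) (F : Vtx → ℝ → ℝ) (u : H1 Vtx) : ℝ :=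
  (1/2) * ∑' x, (gradSq adj (fun y => u y) x + Vp x * (u x)^2) - ∑' x, F x (u x)

/-- the Nehari manifold `N = {u ∈ H¹\{0} : Φ'(u)u = 0}`. -/
def Nehari (adj : Vtx → Vtx → Prop) (Vp : Vtx → ℝ) (F : Vtx → ℝ → ℝ) : Set (H1 Vtx) :=
  {u | u ≠ 0 ∧ fderiv ℝ (PhiF adj Vp F) u u = 0}

/-- adjacency of the lattice graph `ℤ^N`. -/
def adjZ (N : ℕ) (x y : Fin N → ℤ) : Prop := (∑ i, (x i - y i).natAbs) = 1

end

/-!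
On the segment from `0` to `u`, the monotonicity of `f t / |t|` puts `s ↦ u * f (u * s)` strictly
below the chord `s ↦ f u * u * s`, whatever the sign of `u`. Since `∫₀ᵘ f = ∫₀¹ u * f (u * s) ds`,
integrating over `[0, 1]` gives the factor `1/2`.
-/

open Set MeasureTheory

theorem intervalIntegral_lt_of_lt_mul {g : ℝ → ℝ} {b c : ℝ} (hb : 0 < b)
    (hg : IntervalIntegrable g volume 0 b) (hlt : ∀ s ∈ Ioo 0 b, g s < c * s) :
    ∫ s in (0 : ℝ)..b, g s < c * (b ^ 2 / 2) := by
  have hc : IntervalIntegrable (fun s => c * s) volume 0 b :=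
    (continuous_const_mul c).intervalIntegrable 0 b
  have hpos : 0 < ∫ s in (0 : ℝ)..b, (c * s - g s) :=
    intervalIntegral.intervalIntegral_pos_of_pos_on (hc.sub hg)
      (fun s hs => sub_pos.2 (hlt s hs)) hb
  have hchord : ∫ s in (0 : ℝ)..b, c * s = c * (b ^ 2 / 2) := by
    rw [intervalIntegral.integral_const_mul, integral_id, zero_pow two_ne_zero, sub_zero]
  rwa [intervalIntegral.integral_sub hc hg, sub_pos, hchord] at hpos

theorem mul_apply_mul_lt_of_strictMonoOn_div_abs {f : ℝ → ℝ} {u s : ℝ}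
    (hneg : StrictMonoOn (fun t => f t / |t|) (Iio 0))
    (hpos : StrictMonoOn (fun t => f t / |t|) (Ioi 0))
    (hu : u ≠ 0) (hs : s ∈ Ioo (0 : ℝ) 1) :
    u * f (u * s) < f u * u * s := by
  obtain ⟨hs0, hs1⟩ := hs
  rcases hu.lt_or_gt with hu | hu
  · have hus : u * s < 0 := mul_neg_of_neg_of_pos hu hs0
    have hslope : f u / -u < f (u * s) / -(u * s) := by
      simpa only [abs_of_neg hu, abs_of_neg hus] using
        hneg hu hus (lt_mul_of_lt_one_right hu hs1)
    rw [div_lt_div_iff₀ (neg_pos.2 hu) (neg_pos.2 hus)] at hslope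
    linarith
  · have hus : 0 < u * s := mul_pos hu hs0
    have hslope : f (u * s) / (u * s) < f u / u := by
      simpa only [abs_of_pos hu, abs_of_pos hus] using
        hpos hus hu (mul_lt_of_lt_one_right hu hs1)
    rw [div_lt_div_iff₀ hus hu] at hslope
    linarith

theorem intervalIntegral_lt_of_strictMonoOn_div_abs {f : ℝ → ℝ} {u : ℝ}
    (hf : IntervalIntegrable f volume 0 u)
    (hneg : StrictMonoOn (fun t => f t / |t|) (Iio 0))
    (hpos : StrictMonoOn (fun t => f t / |t|) (Ioi 0)) (hu : u ≠ 0) :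
    ∫ s in (0 : ℝ)..u, f s < (1 / 2) * (f u * u) := by
  have hint : IntervalIntegrable (fun s => u * f (u * s)) volume 0 1 := by
    simpa [hu] using (hf.comp_mul_left (c := u)).const_mul u
  calc ∫ s in (0 : ℝ)..u, f s
      = ∫ s in (0 : ℝ)..1, u * f (u * s) := by
        rw [intervalIntegral.integral_const_mul, intervalIntegral.mul_integral_comp_mul_left,
          mul_zero, mul_one]
    _ < f u * u * (1 ^ 2 / 2) :=
        intervalIntegral_lt_of_lt_mul one_pos hint fun _ =>
          mul_apply_mul_lt_of_strictMonoOn_div_abs hneg hpos hu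
    _ = (1 / 2) * (f u * u) := by ring

theorem stmt18_general {f : ℝ → ℝ} {u : ℝ}
    (hf : IntervalIntegrable f volume 0 u)
    (hneg : StrictMonoOn (fun t => f t / |t|) (Iio 0))
    (hpos : StrictMonoOn (fun t => f t / |t|) (Ioi 0)) :
    ∫ s in (0 : ℝ)..u, f s ≤ (1 / 2) * (f u * u) ∧
      (u ≠ 0 → ∫ s in (0 : ℝ)..u, f s < (1 / 2) * (f u * u)) := by
  have hlt : u ≠ 0 → ∫ s in (0 : ℝ)..u, f s < (1 / 2) * (f u * u) :=
    intervalIntegral_lt_of_strictMonoOn_div_abs hf hneg hpos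
  refine ⟨?_, hlt⟩
  rcases eq_or_ne u 0 with rfl | hu
  · simp
  · exact (hlt hu).le

/-- The elementary estimate `F(x,u) ≤ ½ f(x,u)u`, strict for `u ≠ 0`, where
`F(x,u) = ∫₀ᵘ f(x,s) ds`. -/
theorem stmt18 {Vtx : Type*} (f : Vtx → ℝ → ℝ)
    (hcont : ∀ x, Continuous (f x))
    (hsmall : ∀ x, Filter.Tendsto (fun t => f x t / t) (nhdsWithin 0 {(0:ℝ)}ᶜ) (nhds 0))
    (hmono : ∀ x, StrictMonoOn (fun t => f x t / |t|) (Set.Iio 0) ∧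
             StrictMonoOn (fun t => f x t / |t|) (Set.Ioi 0)) :
    ∀ (x : Vtx) (u : ℝ),
      (∫ s in (0:ℝ)..u, f x s) ≤ (1/2) * (f x u * u) ∧
      (u ≠ 0 → (∫ s in (0:ℝ)..u, f x s) < (1/2) * (f x u * u)) :=
  fun x u => stmt18_general ((hcont x).intervalIntegrable 0 u) (hmono x).1 (hmono x).2
end

section
/- Let N ≥ 1 and let f : ℝ → ℝ be continuous with |f(u)| ≤ a(|u| + |u|^{q−1}) for some a > 0, q > 2, f(u) = o(u) as u → 0, u ↦ f(u)/|u| strictly increasing on (−∞,0) and on (0,∞), and F(u)/u² → ∞ as |u| → ∞, where F(u) = ∫₀ᵘ f(s) ds. Let V : ℤ^N → ℝ satisfy 0 < V₀ ≤ V(x) ≤ V_∞ for all x, with V(x₀) < V_∞ for at least one x₀ ∈ ℤ^N. Define Φ(u) = ½Σ_x(|∇u|²(x) + V(x)u(x)²) − Σ_x F(u(x)) and Φ_∞(u) = ½Σ_x(|∇u|²(x) + V_∞ u(x)²) − Σ_x F(u(x)) on H¹(ℤ^N), and set c = inf_{w ∈ H¹\{0}} sup_{s>0} Φ(sw) and c_∞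 = inf_{w ∈ H¹\{0}} sup_{s>0} Φ_∞(sw). Then c < c_∞. -/
open scoped ENNReal

/-!
On a vertex-transitive graph of bounded degree the strict inequality needs no minimizer. A function
`w` whose sup norm is small compared with its `ℓ²` norm can be rescaled to a large norm `S` while
staying where `F` is negligible, so its ray reaches a level of order `S²`. An almost optimal `w` for
`c_∞` is therefore concentrated: `η‖w‖ ≤ |w x₁|` for some vertex `x₁`, with `η` independent of `w`.
The limit functional is invariant under automorphisms, so `x₁` may be moved to the vertex `x₀` where
`V < V_∞`. Along the moved ray, either the norm is so small that `Φ ≤ c_∞/2`, or the deficit of `V`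
at `x₀` puts `Φ` below `Φ_∞` by a fixed amount `g`; as `sup Φ_∞ < c_∞ + g` on this ray, `c < c_∞`.
-/

open Filter Topology Asymptotics Set

section Primitive

variable {f : ℝ → ℝ}

theorem isLittleO_id_nhdsNE_iff :
    (f =o[𝓝[≠] 0] fun t => t) ↔
      ∀ ε > 0, ∃ δ > 0, ∀ t : ℝ, t ≠ 0 → |t| < δ → |f t| ≤ ε * |t| := by
  simp only [isLittleO_iff, eventually_nhdsWithin_iff, Metric.eventually_nhds_iff, mem_compl_iff,
    mem_singleton_iff, dist_zero_right, Real.norm_eq_abs]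
  exact forall₂_congr fun _ _ => exists_congr fun _ => and_congr_right fun _ =>
    forall_congr' fun _ => forall_comm

theorem tendsto_cobounded_atTop_iff :
    Tendsto f (Bornology.cobounded ℝ) atTop ↔
      ∀ M : ℝ, ∃ R > 0, ∀ t : ℝ, R ≤ |t| → M ≤ f t := by
  refine tendsto_atTop.trans (forall_congr' fun M => ?_)
  rw [hasBasis_cobounded_norm.eventually_iff]
  constructor
  · rintro ⟨R, -, hR⟩
    exact ⟨max R 1, by positivity, fun t ht => hR ((le_max_left R 1).trans ht)⟩
  · rintro ⟨R, -, hR⟩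
    exact ⟨R, trivial, fun t ht => hR t ht⟩

theorem tendsto_div_abs_of_isLittleO_id (hf : f =o[𝓝[≠] 0] fun t => t) :
    Tendsto (fun t => f t / |t|) (𝓝[≠] 0) (𝓝 0) :=
  (isLittleO_abs_right.2 hf).tendsto_div_nhds_zero

theorem nonneg_of_monotoneOn_div_abs (hf : f =o[𝓝[≠] 0] fun t => t)
    (hmono : MonotoneOn (fun t => f t / |t|) (Ioi 0)) {t : ℝ} (ht : 0 < t) : 0 ≤ f t := by
  have hlim : Tendsto (fun s => f s / |s|) (𝓝[>] 0) (𝓝 0) :=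
    (tendsto_div_abs_of_isLittleO_id hf).mono_left (nhdsWithin_mono _ fun _ hs => ne_of_gt hs)
  have hle : ∀ᶠ s in 𝓝[>] (0 : ℝ), f s / |s| ≤ f t / |t| := by
    filter_upwards [Ioc_mem_nhdsGT ht] with s hs using hmono hs.1 ht hs.2
  simpa [abs_pos.2 ht.ne'] using (le_div_iff₀ (abs_pos.2 ht.ne')).1 (le_of_tendsto hlim hle)

theorem nonpos_of_monotoneOn_div_abs (hf : f =o[𝓝[≠] 0] fun t => t)
    (hmono : MonotoneOn (fun t => f t / |t|) (Iio 0)) {t : ℝ} (ht : t < 0) : f t ≤ 0 := by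
  have hlim : Tendsto (fun s => f s / |s|) (𝓝[<] 0) (𝓝 0) :=
    (tendsto_div_abs_of_isLittleO_id hf).mono_left (nhdsWithin_mono _ fun _ hs => ne_of_lt hs)
  have hle : ∀ᶠ s in 𝓝[<] (0 : ℝ), f t / |t| ≤ f s / |s| := by
    filter_upwards [Ico_mem_nhdsLT ht] with s hs using hmono ht hs.2 hs.1
  simpa [abs_pos.2 ht.ne] using (div_le_iff₀ (abs_pos.2 ht.ne)).1 (ge_of_tendsto hlim hle)

theorem integral_nonneg_of_sign (hpos : ∀ t, 0 < t → 0 ≤ f t) (hneg : ∀ t, t < 0 → f t ≤ 0)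
    (t : ℝ) : 0 ≤ ∫ s in (0 : ℝ)..t, f s := by
  rcases le_total 0 t with ht | ht
  · rw [intervalIntegral.integral_of_le ht]
    exact MeasureTheory.setIntegral_nonneg measurableSet_Ioc fun s hs => hpos s hs.1
  · rw [intervalIntegral.integral_symm, intervalIntegral.integral_of_le ht,
      MeasureTheory.integral_Ioc_eq_integral_Ioo, neg_nonneg]
    exact MeasureTheory.setIntegral_nonpos measurableSet_Ioo fun s hs => hneg s hs.2

theorem isLittleO_integral_sq (hf : f =o[𝓝[≠] 0] fun t => t) :
    (fun t => ∫ s in (0 : ℝ)..t, f s) =o[𝓝 0] fun t => t ^ 2 := by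
  refine isLittleO_iff.2 fun ε hε => ?_
  obtain ⟨δ, hδ, hbound⟩ := Metric.eventually_nhds_iff.1
    (eventually_nhdsWithin_iff.1 (isLittleO_iff.1 hf hε))
  filter_upwards [Metric.ball_mem_nhds 0 hδ] with t ht
  have hle : ∀ s ∈ uIoc 0 t, s ≠ 0 → ‖f s‖ ≤ ε * |t| := fun s hs hs0 => by
    have hst : |s| ≤ |t| := by
      simpa using abs_sub_left_of_mem_uIcc (uIoc_subset_uIcc hs)
    have hsδ : dist s 0 < δ := by
      simpa using hst.trans_lt (by simpa using ht)
    exact (hbound hsδ hs0).trans (by gcongr; exact hst)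
  calc ‖∫ s in (0 : ℝ)..t, f s‖ ≤ ε * |t| * |t - 0| :=
        intervalIntegral.norm_integral_le_of_norm_le_const_ae <| by
          filter_upwards [MeasureTheory.Measure.ae_ne MeasureTheory.volume 0] with s hs0 hs
            using hle s hs hs0
    _ = ε * ‖t ^ 2‖ := by rw [sub_zero, mul_assoc, ← abs_mul, ← sq, Real.norm_eq_abs]

end Primitive

/-- The class of energy densities `F` for which the mountain-pass geometry holds: nonnegative,
`o(t²)` at the origin and of faster than quadratic growth at infinity. -/
structure IsSuperquadratic (F : ℝ → ℝ) : Prop where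
  nonneg : ∀ t, 0 ≤ F t
  isLittleO : F =o[𝓝 0] fun t => t ^ 2
  tendsto_div_sq : Tendsto (fun t => F t / t ^ 2) (Bornology.cobounded ℝ) atTop

theorem isSuperquadratic_integral {f : ℝ → ℝ} (hf : f =o[𝓝[≠] 0] fun t => t)
    (hneg : MonotoneOn (fun t => f t / |t|) (Iio 0))
    (hpos : MonotoneOn (fun t => f t / |t|) (Ioi 0))
    (hsuper : Tendsto (fun t => (∫ s in (0 : ℝ)..t, f s) / t ^ 2) (Bornology.cobounded ℝ) atTop) :
    IsSuperquadratic fun t => ∫ s in (0 : ℝ)..t, f s where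
  nonneg := integral_nonneg_of_sign (fun _ => nonneg_of_monotoneOn_div_abs hf hpos)
    (fun _ => nonpos_of_monotoneOn_div_abs hf hneg)
  isLittleO := isLittleO_integral_sq hf
  tendsto_div_sq := hsuper

theorem IsSuperquadratic.exists_mul_sq_sub_le {F : ℝ → ℝ} (hF : IsSuperquadratic F) (M : ℝ) :
    ∃ B, ∀ t, M * t ^ 2 - F t ≤ B := by
  obtain ⟨R, -, hR⟩ := (hasBasis_cobounded_norm (E := ℝ)).eventually_iff.1
    (hF.tendsto_div_sq.eventually_ge_atTop M)
  refine ⟨|M| * (max R 1) ^ 2, fun t => ?_⟩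
  by_cases ht : max R 1 ≤ |t|
  · have ht0 : 0 < |t| := one_pos.trans_le ((le_max_right R 1).trans ht)
    have hFt := (le_div_iff₀ (by rw [← sq_abs]; positivity)).1 (hR ((le_max_left R 1).trans ht))
    have : 0 ≤ |M| * (max R 1) ^ 2 := by positivity
    linarith
  · have ht2 : t ^ 2 ≤ (max R 1) ^ 2 := by rw [← sq_abs]; gcongr; exact (not_le.1 ht).le
    calc M * t ^ 2 - F t ≤ M * t ^ 2 := sub_le_self _ (hF.nonneg t)
      _ ≤ |M| * (max R 1) ^ 2 := by gcongr; exact le_abs_self M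

namespace H1

variable {α β : Type*}

theorem hasSum_sq (w : H1 α) : HasSum (fun x => w x ^ 2) (‖w‖ ^ 2) := by
  simpa using lp.hasSum_norm (p := 2) (by norm_num) w

theorem abs_apply_le_norm (w : H1 α) (x : α) : |w x| ≤ ‖w‖ :=
  lp.norm_apply_le_norm two_ne_zero w x

theorem smul_apply (s : ℝ) (w : H1 α) (x : α) : (s • w) x = s * w x := rfl

theorem mul_norm_smul_le_abs {η : ℝ} {w : H1 α} {x : α} (h : η * ‖w‖ ≤ |w x|) (s : ℝ) :
    η * ‖s • w‖ ≤ |(s • w) x| := by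
  rw [norm_smul, Real.norm_eq_abs, smul_apply, abs_mul, mul_left_comm]
  gcongr

theorem exists_apply_ne_zero {w : H1 α} (hw : w ≠ 0) : ∃ x, w x ≠ 0 := by
  by_contra! h
  exact hw (lp.ext (funext h))

theorem summable_comp {F : ℝ → ℝ} (hF : F =o[𝓝 0] fun t => t ^ 2) (w : H1 α) :
    Summable fun x => F (w x) := by
  have hw : Tendsto (fun x => w x) cofinite (𝓝 0) :=
    tendsto_zero_iff_abs_tendsto_zero _ |>.2 <| by
      simpa [Function.comp_def, Real.sqrt_sq_eq_abs] using
        (hasSum_sq w).summable.tendsto_cofinite_zero.sqrt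
  exact summable_of_isBigO (hasSum_sq w).summable (hF.isBigO.comp_tendsto hw)

/-- The pullback `w ∘ e` of `w ∈ H¹` along a bijection `e` of the vertex sets. -/
def compEquiv (w : H1 β) (e : α ≃ β) : H1 α :=
  ⟨fun x => w (e x), memℓp_gen <| by
    simpa [Function.comp_def] using e.summable_iff.2 (hasSum_sq w).summable⟩

theorem compEquiv_apply (w : H1 β) (e : α ≃ β) (x : α) : compEquiv w e x = w (e x) := rfl

theorem smul_compEquiv (s : ℝ) (w : H1 β) (e : α ≃ β) :
    s • compEquiv w e = compEquiv (s • w) e := rfl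

theorem norm_compEquiv (w : H1 β) (e : α ≃ β) : ‖compEquiv w e‖ = ‖w‖ := by
  refine (sq_eq_sq₀ (norm_nonneg _) (norm_nonneg _)).1 ?_
  exact (hasSum_sq (compEquiv w e)).unique (e.hasSum_iff.2 (hasSum_sq w))

end H1

section Graph

variable {α : Type*} {adj : α → α → Prop} {d : ℕ}

/-- The relation `adj` is the adjacency of an undirected graph all of whose vertices have degree at
most `d`; the extended cardinality makes the bound include local finiteness. -/
structure HasDegreeLE (adj : α → α → Prop) (d : ℕ) : Prop where
  symm : ∀ ⦃x y⦄, adj x y → adj y x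
  encard_le : ∀ x, {y | adj x y}.encard ≤ d

/-- The oriented edges `(x, y)`, `x ∼ y`, of a graph. -/
abbrev OrientedEdge (adj : α → α → Prop) := Σ x, {y // adj x y}

/-- Reversal of oriented edges. -/
def HasDegreeLE.reverse (hadj : HasDegreeLE adj d) : OrientedEdge adj ≃ OrientedEdge adj where
  toFun e := ⟨e.2, e.1, hadj.symm e.2.2⟩
  invFun e := ⟨e.2, e.1, hadj.symm e.2.2⟩

namespace HasDegreeLE

theorem finite (hadj : HasDegreeLE adj d) (x : α) : Finite {y // adj x y} :=
  Set.finite_coe_iff.2 (Set.finite_of_encard_le_coe (hadj.encard_le x))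

theorem card_le (hadj : HasDegreeLE adj d) (x : α) : Nat.card {y // adj x y} ≤ d :=
  ENat.toNat_le_of_le_natCast (hadj.encard_le x)

theorem tsum_neighbors_le (hadj : HasDegreeLE adj d) (x : α) {c : ℝ} (hc : 0 ≤ c) :
    ∑' _ : {y // adj x y}, c ≤ d * c := by
  rw [tsum_const, nsmul_eq_mul]
  gcongr
  exact hadj.card_le x

variable {g u : α → ℝ}

theorem summable_fst (hadj : HasDegreeLE adj d) (hg : ∀ x, 0 ≤ g x) (hs : Summable g) :
    Summable fun e : OrientedEdge adj => g e.1 := by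
  refine (summable_sigma_of_nonneg fun e => hg e.1).2 ⟨fun x => ?_, ?_⟩
  · have := hadj.finite x
    exact Summable.of_finite
  · exact Summable.of_nonneg_of_le (fun x => tsum_nonneg fun _ => hg x)
      (fun x => hadj.tsum_neighbors_le x (hg x)) (hs.mul_left _)

theorem tsum_fst_le (hadj : HasDegreeLE adj d) (hg : ∀ x, 0 ≤ g x) (hs : Summable g) :
    ∑' e : OrientedEdge adj, g e.1 ≤ d * ∑' x, g x := by
  have hsum := hadj.summable_fst hg hs
  rw [hsum.tsum_sigma, ← tsum_mul_left]
  exact hsum.sigma.tsum_le_tsum (fun x => hadj.tsum_neighbors_le x (hg x)) (hs.mul_left _)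

theorem summable_snd (hadj : HasDegreeLE adj d) (hg : ∀ x, 0 ≤ g x) (hs : Summable g) :
    Summable fun e : OrientedEdge adj => g e.2 :=
  hadj.reverse.summable_iff.2 (hadj.summable_fst hg hs)

theorem tsum_snd_eq_tsum_fst (hadj : HasDegreeLE adj d) (g : α → ℝ) :
    ∑' e : OrientedEdge adj, g e.2 = ∑' e : OrientedEdge adj, g e.1 :=
  hadj.reverse.tsum_eq fun e => g e.1

theorem summable_diff_sq (hadj : HasDegreeLE adj d) (hu : Summable fun x => u x ^ 2) :
    Summable fun e : OrientedEdge adj => (u e.2 - u e.1) ^ 2 :=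
  .of_nonneg_of_le (fun _ => sq_nonneg _)
    (fun e => by nlinarith [sq_nonneg (u e.2 + u e.1)])
    (((hadj.summable_snd (fun _ => sq_nonneg _) hu).add
      (hadj.summable_fst (fun _ => sq_nonneg _) hu)).mul_left 2)

theorem tsum_diff_sq_le (hadj : HasDegreeLE adj d) (hu : Summable fun x => u x ^ 2) :
    ∑' e : OrientedEdge adj, (u e.2 - u e.1) ^ 2 ≤ 4 * d * ∑' x, u x ^ 2 := by
  have hfst := hadj.summable_fst (fun _ => sq_nonneg _) hu
  have hsnd := hadj.summable_snd (fun _ => sq_nonneg _) hu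
  calc ∑' e : OrientedEdge adj, (u e.2 - u e.1) ^ 2
      ≤ ∑' e : OrientedEdge adj, 2 * (u e.2 ^ 2 + u e.1 ^ 2) :=
        (hadj.summable_diff_sq hu).tsum_le_tsum
          (fun e => by nlinarith [sq_nonneg (u e.2 + u e.1)]) ((hsnd.add hfst).mul_left 2)
    _ = 4 * ∑' e : OrientedEdge adj, u e.1 ^ 2 := by
        rw [tsum_mul_left, hsnd.tsum_add hfst, hadj.tsum_snd_eq_tsum_fst fun x => u x ^ 2]
        ring
    _ ≤ 4 * (d * ∑' x, u x ^ 2) := by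
        gcongr
        exact hadj.tsum_fst_le (fun _ => sq_nonneg _) hu
    _ = 4 * d * ∑' x, u x ^ 2 := by ring

end HasDegreeLE

theorem gradSq_eq_tsum_sq (u : α → ℝ) (x : α) :
    gradSq adj u x = 1 / 2 * ∑' y : {y // adj x y}, (u y - u x) ^ 2 := by
  simp only [gradSq, gammaProd, sq]

theorem gradSq_nonneg (u : α → ℝ) (x : α) : 0 ≤ gradSq adj u x := by
  rw [gradSq_eq_tsum_sq]
  exact mul_nonneg (by norm_num) (tsum_nonneg fun _ => sq_nonneg _)

theorem gradSq_comp_relIso (φ : adj ≃r adj) (u : α → ℝ) (x : α) :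
    gradSq adj (fun y => u (φ y)) x = gradSq adj u (φ x) := by
  simp only [gradSq_eq_tsum_sq]
  congr 1
  exact (φ.toEquiv.subtypeEquiv fun _ => φ.map_rel_iff.symm).tsum_eq
    fun y : {y // adj (φ x) y} => (u y - u (φ x)) ^ 2

variable {u : α → ℝ}

theorem summable_gradSq (hadj : HasDegreeLE adj d) (hu : Summable fun x => u x ^ 2) :
    Summable (gradSq adj u) :=
  ((hadj.summable_diff_sq hu).sigma.mul_left _).congr fun x => (gradSq_eq_tsum_sq u x).symm

theorem tsum_gradSq_le (hadj : HasDegreeLE adj d) (hu : Summable fun x => u x ^ 2) :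
    ∑' x, gradSq adj u x ≤ 2 * d * ∑' x, u x ^ 2 := by
  have hle := hadj.tsum_diff_sq_le hu
  rw [(hadj.summable_diff_sq hu).tsum_sigma] at hle
  simp only [gradSq_eq_tsum_sq, tsum_mul_left]
  linarith

end Graph

section Energy

variable {α : Type*} {adj : α → α → Prop} {d : ℕ} {V : α → ℝ} {V₀ C : ℝ} {F : ℝ → ℝ}

theorem summable_potential (hV : ∀ x, V x ∈ Icc V₀ C) (w : H1 α) :
    Summable fun x => V x * w x ^ 2 := by
  refine .of_norm_bounded ((H1.hasSum_sq w).summable.mul_left (max |V₀| |C|)) fun x => ?_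
  rw [norm_mul, Real.norm_eq_abs, Real.norm_of_nonneg (sq_nonneg (w x))]
  gcongr
  exact abs_le_max_abs_abs (hV x).1 (hV x).2

theorem summable_energyDensity (hadj : HasDegreeLE adj d) (hV : ∀ x, V x ∈ Icc V₀ C) (w : H1 α) :
    Summable fun x => gradSq adj w x + V x * w x ^ 2 :=
  (summable_gradSq hadj (H1.hasSum_sq w).summable).add (summable_potential hV w)

theorem PhiF_le (hadj : HasDegreeLE adj d) (hV : ∀ x, V x ∈ Icc V₀ C) (w : H1 α) :
    PhiF adj V (fun _ => F) w ≤ (d + C / 2) * ‖w‖ ^ 2 - ∑' x, F (w x) := by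
  have hw := H1.hasSum_sq w
  have hgrad : ∑' x, gradSq adj w x ≤ 2 * d * ‖w‖ ^ 2 :=
    hw.tsum_eq ▸ tsum_gradSq_le hadj hw.summable
  have hpot : ∑' x, V x * w x ^ 2 ≤ C * ‖w‖ ^ 2 :=
    hasSum_le (fun x => by gcongr; exact (hV x).2) (summable_potential hV w).hasSum
      (hw.mul_left C)
  rw [PhiF, (summable_gradSq hadj hw.summable).tsum_add (summable_potential hV w)]
  linarith

theorem exists_le_PhiF_of_abs_lt (hadj : HasDegreeLE adj d) (hV : ∀ x, V x ∈ Icc V₀ C)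
    (hF : F =o[𝓝 0] fun t => t ^ 2) {ε : ℝ} (hε : 0 < ε) :
    ∃ δ > 0, ∀ w : H1 α, (∀ x, |w x| < δ) →
      (V₀ / 2 - ε) * ‖w‖ ^ 2 ≤ PhiF adj V (fun _ => F) w := by
  obtain ⟨δ, hδ, hbound⟩ := Metric.eventually_nhds_iff.1 (isLittleO_iff.1 hF hε)
  refine ⟨δ, hδ, fun w hsmall => ?_⟩
  have hw := H1.hasSum_sq w
  have hFw : ∑' x, F (w x) ≤ ε * ‖w‖ ^ 2 :=
    hasSum_le (fun x => by simpa using (le_abs_self _).trans (hbound (by simpa using hsmall x)))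
      (H1.summable_comp hF w).hasSum (hw.mul_left ε)
  have hpot : V₀ * ‖w‖ ^ 2 ≤ ∑' x, (gradSq adj w x + V x * w x ^ 2) :=
    hasSum_le (fun x => (mul_le_mul_of_nonneg_right (hV x).1 (sq_nonneg _)).trans
      (le_add_of_nonneg_left (gradSq_nonneg _ x)))
      (hw.mul_left V₀) (summable_energyDensity hadj hV w).hasSum
  rw [PhiF]
  linarith

theorem PhiF_add_le_PhiF_const (hadj : HasDegreeLE adj d) (hV : ∀ x, V x ∈ Icc V₀ C) (w : H1 α)
    (x₀ : α) :
    PhiF adj V (fun _ => F) w + (C - V x₀) / 2 * w x₀ ^ 2 ≤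
      PhiF adj (fun _ => C) (fun _ => F) w := by
  have hsV := summable_energyDensity hadj hV w
  have hsC := summable_energyDensity (V := fun _ => C) hadj (fun _ => right_mem_Icc.2 le_rfl) w
  have hgap := (hsC.sub hsV).le_tsum x₀ fun x _ => by
    linarith [mul_le_mul_of_nonneg_right (hV x).2 (sq_nonneg (w x))]
  rw [hsC.tsum_sub hsV] at hgap
  rw [PhiF, PhiF]
  linarith

theorem PhiF_compEquiv (φ : adj ≃r adj) (C : ℝ) (F : ℝ → ℝ) (w : H1 α) :
    PhiF adj (fun _ => C) (fun _ => F) (H1.compEquiv w φ.toEquiv) =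
      PhiF adj (fun _ => C) (fun _ => F) w := by
  have hgrad (x : α) : gradSq adj (H1.compEquiv w φ.toEquiv) x = gradSq adj w (φ x) :=
    gradSq_comp_relIso φ w x
  simp only [PhiF, hgrad]
  exact congrArg₂ (fun E P => 1 / 2 * E - P)
    (φ.toEquiv.tsum_eq fun x => gradSq adj w x + C * w x ^ 2) (φ.toEquiv.tsum_eq fun x => F (w x))

/-- The highest value of `Φ` on the ray through `w`, for a nonlinearity not depending on the
vertex. It is the junk value `0` when `Φ` is unbounded above on the ray. -/
noncomputable def rayMax (adj : α → α → Prop) (V : α → ℝ) (F : ℝ → ℝ) (w : H1 α) : ℝ :=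
  sSup ((fun s : ℝ => PhiF adj V (fun _ => F) (s • w)) '' Ioi 0)

/-- The ground state level of `Φ`, in its min-max characterization over rays. -/
noncomputable def groundLevel (adj : α → α → Prop) (V : α → ℝ) (F : ℝ → ℝ) : ℝ :=
  sInf {y | ∃ w : H1 α, w ≠ 0 ∧ y = rayMax adj V F w}

theorem rayMax_compEquiv (φ : adj ≃r adj) (C : ℝ) (F : ℝ → ℝ) (w : H1 α) :
    rayMax adj (fun _ => C) F (H1.compEquiv w φ.toEquiv) = rayMax adj (fun _ => C) F w := by
  simp only [rayMax, H1.smul_compEquiv, PhiF_compEquiv]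

theorem rayMax_le {w : H1 α} {B : ℝ} (h : ∀ s : ℝ, 0 < s → PhiF adj V (fun _ => F) (s • w) ≤ B) :
    rayMax adj V F w ≤ B :=
  csSup_le ⟨_, 1, mem_Ioi.2 one_pos, rfl⟩ (forall_mem_image.2 h)

theorem bddAbove_ray (hadj : HasDegreeLE adj d) (hV : ∀ x, V x ∈ Icc V₀ C) (hF : IsSuperquadratic F)
    {w : H1 α} (hw : w ≠ 0) :
    BddAbove ((fun s : ℝ => PhiF adj V (fun _ => F) (s • w)) '' Ioi 0) := by
  obtain ⟨x, hx⟩ := H1.exists_apply_ne_zero hw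
  obtain ⟨B, hB⟩ := hF.exists_mul_sq_sub_le ((d + C / 2) * ‖w‖ ^ 2 / w x ^ 2)
  refine ⟨B, forall_mem_image.2 fun s _ => ?_⟩
  have hFx : F (s * w x) ≤ ∑' y, F ((s • w) y) :=
    (H1.summable_comp hF.isLittleO (s • w)).le_tsum x fun _ _ => hF.nonneg _
  calc PhiF adj V (fun _ => F) (s • w)
      ≤ (d + C / 2) * ‖s • w‖ ^ 2 - ∑' y, F ((s • w) y) := PhiF_le hadj hV _
    _ ≤ (d + C / 2) * ‖s • w‖ ^ 2 - F (s * w x) := by gcongr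
    _ = (d + C / 2) * ‖w‖ ^ 2 / w x ^ 2 * (s * w x) ^ 2 - F (s * w x) := by
        rw [norm_smul, Real.norm_eq_abs, mul_pow, sq_abs]
        field_simp
    _ ≤ B := hB _

theorem PhiF_smul_le_rayMax (hadj : HasDegreeLE adj d) (hV : ∀ x, V x ∈ Icc V₀ C)
    (hF : IsSuperquadratic F) {w : H1 α} (hw : w ≠ 0) {s : ℝ} (hs : 0 < s) :
    PhiF adj V (fun _ => F) (s • w) ≤ rayMax adj V F w :=
  le_csSup (bddAbove_ray hadj hV hF hw) (mem_image_of_mem _ hs)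

theorem exists_le_rayMax_of_abs_lt (hadj : HasDegreeLE adj d) (hV : ∀ x, V x ∈ Icc V₀ C)
    (hF : IsSuperquadratic F) {ε : ℝ} (hε : 0 < ε) :
    ∃ δ > 0, ∀ S > 0, ∀ w : H1 α, w ≠ 0 → (∀ x, S * |w x| < δ * ‖w‖) →
      (V₀ / 2 - ε) * S ^ 2 ≤ rayMax adj V F w := by
  obtain ⟨δ, hδ, hle⟩ := exists_le_PhiF_of_abs_lt hadj hV hF.isLittleO hε
  refine ⟨δ, hδ, fun S hS w hw hspread => ?_⟩
  have hw0 : 0 < ‖w‖ := norm_pos_iff.2 hw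
  have hs : 0 < S / ‖w‖ := div_pos hS hw0
  have hnorm : ‖(S / ‖w‖) • w‖ = S := by
    rw [norm_smul, Real.norm_of_nonneg hs.le, div_mul_cancel₀ _ hw0.ne']
  have hsmall : ∀ x, |((S / ‖w‖) • w) x| < δ := fun x => by
    rw [H1.smul_apply, abs_mul, abs_of_pos hs, div_mul_eq_mul_div,
      div_lt_iff₀ hw0]
    exact hspread x
  calc (V₀ / 2 - ε) * S ^ 2 = (V₀ / 2 - ε) * ‖(S / ‖w‖) • w‖ ^ 2 := by rw [hnorm]
    _ ≤ PhiF adj V (fun _ => F) ((S / ‖w‖) • w) := hle _ hsmall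
    _ ≤ rayMax adj V F w := PhiF_smul_le_rayMax hadj hV hF hw hs

theorem exists_forall_le_rayMax (hadj : HasDegreeLE adj d) (hV : ∀ x, V x ∈ Icc V₀ C)
    (hF : IsSuperquadratic F) {ε : ℝ} (hε : 0 < ε) :
    ∃ r > 0, ∀ w : H1 α, w ≠ 0 → (V₀ / 2 - ε) * r ≤ rayMax adj V F w := by
  obtain ⟨δ, hδ, hle⟩ := exists_le_rayMax_of_abs_lt hadj hV hF hε
  refine ⟨(δ / 2) ^ 2, by positivity, fun w hw => hle _ (half_pos hδ) w hw fun x => ?_⟩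
  calc δ / 2 * |w x| ≤ δ / 2 * ‖w‖ := by
        gcongr
        exact H1.abs_apply_le_norm w x
    _ < δ * ‖w‖ := mul_lt_mul_of_pos_right (half_lt_self hδ) (norm_pos_iff.2 hw)

theorem exists_mul_norm_le_abs_of_rayMax_le (hadj : HasDegreeLE adj d)
    (hV : ∀ x, V x ∈ Icc V₀ C) (hV₀ : 0 < V₀) (hF : IsSuperquadratic F) (L : ℝ) :
    ∃ η > 0, ∀ w : H1 α, w ≠ 0 → rayMax adj V F w ≤ L → ∃ x, η * ‖w‖ ≤ |w x| := by
  obtain ⟨δ, hδ, hle⟩ := exists_le_rayMax_of_abs_lt hadj hV hF (ε := V₀ / 4) (by positivity)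
  have hlim : Tendsto (fun S : ℝ => (V₀ / 2 - V₀ / 4) * S ^ 2) atTop atTop :=
    (tendsto_pow_atTop two_ne_zero).const_mul_atTop (by linarith)
  obtain ⟨S, hSL, hS⟩ := ((hlim.eventually_gt_atTop L).and (eventually_gt_atTop 0)).exists
  refine ⟨δ / S, by positivity, fun w hw hwL => ?_⟩
  by_contra! hspread
  refine (hSL.trans_le (hle S hS w hw fun x => ?_)).not_ge hwL
  have hx := hspread x
  rwa [div_mul_eq_mul_div, lt_div_iff₀' hS] at hx

theorem bddBelow_setOf_rayMax (hadj : HasDegreeLE adj d) (hV : ∀ x, V x ∈ Icc V₀ C)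
    (hF : IsSuperquadratic F) : BddBelow {y | ∃ w : H1 α, w ≠ 0 ∧ y = rayMax adj V F w} := by
  obtain ⟨r, -, hle⟩ := exists_forall_le_rayMax hadj hV hF one_pos
  refine ⟨(V₀ / 2 - 1) * r, ?_⟩
  rintro _ ⟨w, hw, rfl⟩
  exact hle w hw

theorem groundLevel_le_rayMax (hadj : HasDegreeLE adj d) (hV : ∀ x, V x ∈ Icc V₀ C)
    (hF : IsSuperquadratic F) {w : H1 α} (hw : w ≠ 0) :
    groundLevel adj V F ≤ rayMax adj V F w :=
  csInf_le (bddBelow_setOf_rayMax hadj hV hF) ⟨w, hw, rfl⟩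

theorem nonempty_setOf_rayMax [Nonempty α] (adj : α → α → Prop) (V : α → ℝ) (F : ℝ → ℝ) :
    {y | ∃ w : H1 α, w ≠ 0 ∧ y = rayMax adj V F w}.Nonempty := by
  classical
  refine ⟨_, lp.single 2 (Classical.arbitrary α) (1 : ℝ), ?_, rfl⟩
  rw [← norm_ne_zero_iff, lp.norm_single two_pos]
  simp

theorem groundLevel_pos [Nonempty α] (hadj : HasDegreeLE adj d) (hV : ∀ x, V x ∈ Icc V₀ C)
    (hV₀ : 0 < V₀) (hF : IsSuperquadratic F) : 0 < groundLevel adj V F := by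
  obtain ⟨r, hr, hle⟩ := exists_forall_le_rayMax hadj hV hF (ε := V₀ / 4) (by positivity)
  have hpos : 0 < (V₀ / 2 - V₀ / 4) * r := mul_pos (by linarith) hr
  refine hpos.trans_le (le_csInf (nonempty_setOf_rayMax adj V F) ?_)
  rintro _ ⟨w, hw, rfl⟩
  exact hle w hw

theorem exists_rayMax_lt [Nonempty α] {L : ℝ} (hL : groundLevel adj V F < L) :
    ∃ w : H1 α, w ≠ 0 ∧ rayMax adj V F w < L := by
  obtain ⟨_, ⟨w, hw, rfl⟩, hlt⟩ := exists_lt_of_csInf_lt (nonempty_setOf_rayMax adj V F) hL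
  exact ⟨w, hw, hlt⟩

theorem exists_rayMax_le_max_sub (hadj : HasDegreeLE adj d) (hV : ∀ x, V x ∈ Icc V₀ C)
    (hC : 0 < C) (hF : IsSuperquadratic F) {x₀ : α} (hx₀ : V x₀ < C) {η b : ℝ} (hη : 0 < η)
    (hb : 0 < b) :
    ∃ g > 0, ∀ w : H1 α, w ≠ 0 → η * ‖w‖ ≤ |w x₀| →
      rayMax adj V F w ≤ max b (rayMax adj (fun _ => C) F w - g) := by
  have hK : 0 < d + C / 2 := by positivity
  have : 0 < C - V x₀ := sub_pos.2 hx₀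
  refine ⟨(C - V x₀) / 2 * (η ^ 2 * (b / (d + C / 2))), by positivity, fun w hw hwx => ?_⟩
  refine rayMax_le fun s hs => le_max_iff.2 ?_
  rcases le_total (‖s • w‖ ^ 2) (b / (d + C / 2)) with hsmall | hlarge
  · left
    calc PhiF adj V (fun _ => F) (s • w)
        ≤ (d + C / 2) * ‖s • w‖ ^ 2 - ∑' x, F ((s • w) x) := PhiF_le hadj hV _
      _ ≤ (d + C / 2) * ‖s • w‖ ^ 2 := sub_le_self _ (tsum_nonneg fun _ => hF.nonneg _)
      _ ≤ b := (le_div_iff₀' hK).1 hsmall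
  · right
    have hsx : η ^ 2 * (b / (d + C / 2)) ≤ (s • w) x₀ ^ 2 :=
      calc η ^ 2 * (b / (d + C / 2)) ≤ η ^ 2 * ‖s • w‖ ^ 2 := by gcongr
        _ = (η * ‖s • w‖) ^ 2 := by rw [mul_pow]
        _ ≤ |(s • w) x₀| ^ 2 := by
            gcongr
            exact H1.mul_norm_smul_le_abs hwx s
        _ = (s • w) x₀ ^ 2 := sq_abs _
    have hgain : (C - V x₀) / 2 * (η ^ 2 * (b / (d + C / 2))) ≤
        (C - V x₀) / 2 * (s • w) x₀ ^ 2 := by gcongr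
    have hC_mem : ∀ _ : α, C ∈ Icc C C := fun _ => right_mem_Icc.2 le_rfl
    linarith [PhiF_add_le_PhiF_const (F := F) hadj hV (s • w) x₀,
      PhiF_smul_le_rayMax (V := fun _ => C) hadj hC_mem hF hw hs]

end Energy

section Lattice

theorem adjZ_symm {N : ℕ} {x y : Fin N → ℤ} (h : adjZ N x y) : adjZ N y x := by
  rw [adjZ, ← h]
  exact Finset.sum_congr rfl fun i _ => by omega

theorem adjZ_mem_Icc {N : ℕ} {x y : Fin N → ℤ} (h : adjZ N x y) : y ∈ Icc (x - 1) (x + 1) := by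
  have hi (i : Fin N) : (x i - y i).natAbs ≤ 1 :=
    (Finset.single_le_sum (f := fun i => (x i - y i).natAbs) (fun _ _ => Nat.zero_le _)
      (Finset.mem_univ i)).trans_eq h
  refine ⟨fun i => ?_, fun i => ?_⟩ <;> specialize hi i
  · simp only [Pi.sub_apply, Pi.one_apply]
    omega
  · simp only [Pi.add_apply, Pi.one_apply]
    omega

theorem hasDegreeLE_adjZ (N : ℕ) : HasDegreeLE (adjZ N) (3 ^ N) where
  symm _ _ := adjZ_symm
  encard_le x := by
    refine (encard_le_encard fun _ => adjZ_mem_Icc).trans ?_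
    rw [← Finset.coe_Icc, encard_coe_eq_coe_finsetCard, Pi.card_Icc]
    have hcard (i : Fin N) : (Finset.Icc (x i - 1) (x i + 1)).card = 3 := by
      rw [Int.card_Icc]
      omega
    simp [hcard]

/-- Translation by `t` as an automorphism of the lattice graph. -/
def translationZ {N : ℕ} (t : Fin N → ℤ) : adjZ N ≃r adjZ N where
  toEquiv := Equiv.addRight t
  map_rel_iff' := by simp [adjZ]

theorem exists_relIso_adjZ {N : ℕ} (x y : Fin N → ℤ) : ∃ φ : adjZ N ≃r adjZ N, φ x = y :=
  ⟨translationZ (y - x), add_sub_cancel x y⟩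

end Lattice

theorem stmt19_general {α : Type*} {adj : α → α → Prop} {d : ℕ}
    (hadj : HasDegreeLE adj d) (htrans : ∀ x y, ∃ φ : adj ≃r adj, φ x = y)
    {F : ℝ → ℝ} (hF : IsSuperquadratic F) {V : α → ℝ} {V₀ C : ℝ} (hV : ∀ x, V x ∈ Icc V₀ C)
    (hC : 0 < C) {x₀ : α} (hx₀ : V x₀ < C) :
    groundLevel adj V F < groundLevel adj (fun _ => C) F := by
  have : Nonempty α := ⟨x₀⟩
  have hC_mem : ∀ _ : α, C ∈ Icc C C := fun _ => right_mem_Icc.2 le_rfl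
  set c := groundLevel adj (fun _ => C) F
  have hc : 0 < c := groundLevel_pos hadj hC_mem hC hF
  obtain ⟨η, hη, hconc⟩ := exists_mul_norm_le_abs_of_rayMax_le hadj hC_mem hC hF (c + 1)
  obtain ⟨g, hg, hgain⟩ := exists_rayMax_le_max_sub hadj hV hC hF hx₀ hη (half_pos hc)
  obtain ⟨w, hw, hwc⟩ := exists_rayMax_lt (lt_add_of_pos_right c (lt_min one_pos hg))
  obtain ⟨x₁, hx₁⟩ := hconc w hw (hwc.le.trans (by gcongr; exact min_le_left _ _))
  obtain ⟨φ, hφ⟩ := htrans x₀ x₁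
  set v := H1.compEquiv w φ.toEquiv
  have hv : v ≠ 0 := by rwa [← norm_ne_zero_iff, H1.norm_compEquiv, norm_ne_zero_iff]
  have hvx₀ : η * ‖v‖ ≤ |v x₀| := by
    rwa [H1.norm_compEquiv, H1.compEquiv_apply, show φ.toEquiv x₀ = x₁ from hφ]
  calc groundLevel adj V F ≤ rayMax adj V F v := groundLevel_le_rayMax hadj hV hF hv
    _ ≤ max (c / 2) (rayMax adj (fun _ => C) F v - g) := hgain v hv hvx₀
    _ < c := max_lt (half_lt_self hc) <| by
        rw [rayMax_compEquiv]
        linarith [min_le_right 1 g]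

/-- If the potential well is nontrivial (`V(x₀) < V_∞` somewhere), then the ground state
level `c` of `Φ` is strictly below the ground state level `c_∞` of the limit functional
`Φ_∞`, both characterized by the min-max over rays. -/
theorem stmt19 (N : ℕ) (hN : 1 ≤ N)
    (f : ℝ → ℝ) (hcont : Continuous f)
    (a q : ℝ) (ha : 0 < a) (hq : 2 < q)
    (hgrowth : ∀ t, |f t| ≤ a * (|t| + |t| ^ (q - 1)))
    (hsmall : ∀ ε > 0, ∃ δ > 0, ∀ t : ℝ, t ≠ 0 → |t| < δ → |f t| ≤ ε * |t|)
    (hmono : StrictMonoOn (fun t => f t / |t|) (Set.Iio 0) ∧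
             StrictMonoOn (fun t => f t / |t|) (Set.Ioi 0))
    (F : ℝ → ℝ) (hF : ∀ t, F t = ∫ s in (0:ℝ)..t, f s)
    (hsuper : ∀ M : ℝ, ∃ R > 0, ∀ t : ℝ, R ≤ |t| → M ≤ F t / t ^ 2)
    (Vp : (Fin N → ℤ) → ℝ) (V0 Vinf : ℝ) (hV0 : 0 < V0)
    (hVlb : ∀ x, V0 ≤ Vp x) (hVub : ∀ x, Vp x ≤ Vinf)
    (x0 : Fin N → ℤ) (hx0 : Vp x0 < Vinf) :
    sInf {y : ℝ | ∃ w : H1 (Fin N → ℤ), w ≠ 0 ∧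
        y = sSup ((fun s : ℝ => PhiF (adjZ N) Vp (fun _ => F) (s • w)) '' Set.Ioi 0)} <
      sInf {y : ℝ | ∃ w : H1 (Fin N → ℤ), w ≠ 0 ∧
        y = sSup ((fun s : ℝ =>
          PhiF (adjZ N) (fun _ => Vinf) (fun _ => F) (s • w)) '' Set.Ioi 0)} := by
  obtain rfl : F = fun t => ∫ s in (0 : ℝ)..t, f s := funext hF
  exact stmt19_general (hasDegreeLE_adjZ N) exists_relIso_adjZ
    (isSuperquadratic_integral (isLittleO_id_nhdsNE_iff.2 hsmall) hmono.1.monotoneOn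
      hmono.2.monotoneOn (tendsto_cobounded_atTop_iff.2 hsuper))
    (fun x => ⟨hVlb x, hVub x⟩) (hV0.trans_le ((hVlb x0).trans (hVub x0))) hx0
end
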